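/- For every nonnegative integer n and all p, q, the n-fold tensor power of Cl(2,0;ℝ) tensored with Cl(p,q;ℝ) is isomorphic as a real algebra to Cl(p+n, q+n;ℝ). -/

import Mathlib

/-- The real quadratic form of signature `(p, q)` on `Fin (p + q) → ℝ`. -/
noncomputable def signatureForm (p q : ℕ) : QuadraticForm ℝ (Fin (p + q) → ℝ) :=
  QuadraticMap.weightedSumSquares ℝ (fun i : Fin (p + q) => if (i : ℕ) < p then (1 : ℝ) else -1)

/-- `Cl p q` is the real Clifford algebra `Cl(p,q;ℝ)`. -/
noncomputable abbrev Cl (p q : ℕ) : Type :=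
  CliffordAlgebra (signatureForm p q)

open scoped TensorProduct

theorem add_add_mul_self_of_anticommute {A : Type*} [Ring A] {u v w : A}
    (huv : u * v = -(v * u)) (huw : u * w = -(w * u)) (hvw : v * w = -(w * v)) :
    (u + v + w) * (u + v + w) = u * u + v * v + w * w := by
  simp only [mul_add, add_mul, huv, huw, hvw]
  abel

namespace PiTensorProduct

variable (R A : Type*) [CommSemiring R] [Semiring A] [Algebra R A] (n : ℕ)

/-- Splitting off the last factor of a tensor power, as a linear equivalence. -/
noncomputable def finSuccLinearEquiv :
    (⨂[R] _ : Fin (n + 1), A) ≃ₗ[R] (⨂[R] _ : Fin n, A) ⊗[R] A :=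
  (reindex R (fun _ : Fin (n + 1) => A) finSumFinEquiv.symm).trans <|
    (tmulEquiv R A).symm.trans <|
      TensorProduct.congr (LinearEquiv.refl R _) (subsingletonEquiv (0 : Fin 1))

theorem finSuccLinearEquiv_tprod (f : Fin (n + 1) → A) :
    finSuccLinearEquiv R A n (tprod R f) =
      tprod R (fun i : Fin n => f i.castSucc) ⊗ₜ[R] f (Fin.last n) := by
  rw [finSuccLinearEquiv, LinearEquiv.trans_apply, LinearEquiv.trans_apply]
  erw [reindex_tprod, tmulEquiv_symm_apply]
  rw [TensorProduct.congr_tmul]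
  erw [subsingletonEquiv_apply_tprod]
  rfl

/-- Splitting off the last factor of a tensor power, as an algebra equivalence. -/
noncomputable def finSuccAlgEquiv :
    (⨂[R] _ : Fin (n + 1), A) ≃ₐ[R] (⨂[R] _ : Fin n, A) ⊗[R] A :=
  AlgEquiv.ofLinearEquiv (finSuccLinearEquiv R A n)
    (by
      rw [one_def, finSuccLinearEquiv_tprod]
      rfl)
    ((LinearMap.map_mul_iff (finSuccLinearEquiv R A n).toLinearMap).mpr <| by
      ext x y
      change finSuccLinearEquiv R A n (tprod R x * tprod R y) =
        finSuccLinearEquiv R A n (tprod R x) * finSuccLinearEquiv R A n (tprod R y)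
      rw [tprod_mul_tprod, finSuccLinearEquiv_tprod, finSuccLinearEquiv_tprod,
        finSuccLinearEquiv_tprod, Algebra.TensorProduct.tmul_mul_tmul, tprod_mul_tprod]
      rfl)

/-- The empty tensor power of an algebra is the base ring. -/
noncomputable def isEmptyAlgEquiv (κ : Type*) [IsEmpty κ] : (⨂[R] _ : κ, A) ≃ₐ[R] R :=
  AlgEquiv.ofLinearEquiv (isEmptyEquiv κ)
    (by rw [one_def, isEmptyEquiv_apply_tprod])
    ((LinearMap.map_mul_iff (isEmptyEquiv (R := R) (s := fun _ => A) κ).toLinearMap).mpr <| by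
      ext x y
      change isEmptyEquiv (R := R) κ (tprod R x * tprod R y) =
        isEmptyEquiv κ (tprod R x) * isEmptyEquiv κ (tprod R y)
      simp)

end PiTensorProduct

namespace CliffordAlgebra

open QuadraticMap

variable {R M : Type*} [CommRing R] [AddCommGroup M] [Module R M]

theorem commute_of_commute_ι {N A : Type*} [AddCommGroup N] [Module R N] [Ring A] [Algebra R A]
    {Q : QuadraticForm R M} {P : QuadraticForm R N}
    (f : CliffordAlgebra Q →ₐ[R] A) (g : CliffordAlgebra P →ₐ[R] A)
    (h : ∀ m n, Commute (f (ι Q m)) (g (ι P n))) (x : CliffordAlgebra Q) (y : CliffordAlgebra P) :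
    Commute (f x) (g y) := by
  induction x using CliffordAlgebra.induction with
  | algebraMap r => rw [AlgHom.commutes]; exact Algebra.commutes r _
  | mul a b ha hb => rw [map_mul]; exact ha.mul_left hb
  | add a b ha hb => rw [map_add]; exact ha.add_left hb
  | ι m =>
    induction y using CliffordAlgebra.induction with
    | algebraMap r => rw [AlgHom.commutes]; exact (Algebra.commutes r _).symm
    | mul a b ha hb => rw [map_mul]; exact ha.mul_right hb
    | add a b ha hb => rw [map_add]; exact ha.add_right hb
    | ι n => exact h m n

section Plane

variable (R)

/-- The first generator of the Clifford algebra of the form `x² + y²`. -/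
noncomputable def planeFst : CliffordAlgebra ((sq (R := R)).prod (sq (R := R))) :=
  ι _ (1, 0)

/-- The second generator of the Clifford algebra of the form `x² + y²`. -/
noncomputable def planeSnd : CliffordAlgebra ((sq (R := R)).prod (sq (R := R))) :=
  ι _ (0, 1)

theorem planeFst_mul_self : planeFst R * planeFst R = 1 := by
  simp [planeFst, ι_sq_scalar]

theorem planeSnd_mul_self : planeSnd R * planeSnd R = 1 := by
  simp [planeSnd, ι_sq_scalar]

theorem planeFst_mul_planeSnd : planeFst R * planeSnd R = -(planeSnd R * planeFst R) :=
  ι_mul_ι_comm_of_isOrtho (by simp [QuadraticMap.isOrtho_def])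

end Plane

theorem planeFst_mul_planeSnd_mul_self :
    planeFst R * planeSnd R * (planeFst R * planeSnd R) = -1 := by
  calc planeFst R * planeSnd R * (planeFst R * planeSnd R)
      = planeFst R * (planeSnd R * planeFst R) * planeSnd R := by noncomm_ring
    _ = -(planeFst R * planeFst R * (planeSnd R * planeSnd R)) := by
      rw [← neg_eq_iff_eq_neg.mpr (planeFst_mul_planeSnd R)]; noncomm_ring
    _ = -1 := by rw [planeFst_mul_self, planeSnd_mul_self, mul_one]

theorem planeSnd_mul_planeFst_mul_planeSnd :
    planeSnd R * (planeFst R * planeSnd R) = -(planeFst R * planeSnd R * planeSnd R) := by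
  rw [← mul_assoc, ← neg_mul, ← neg_eq_iff_eq_neg.mpr (planeFst_mul_planeSnd R)]

theorem planeFst_mul_planeFst_mul_planeSnd :
    planeFst R * (planeFst R * planeSnd R) = -(planeFst R * planeSnd R * planeFst R) := by
  rw [mul_assoc, ← mul_neg, ← planeFst_mul_planeSnd]

theorem planeFst_mul_planeFst_mul_planeSnd_eq :
    planeFst R * (planeFst R * planeSnd R) = planeSnd R := by
  rw [← mul_assoc, planeFst_mul_self, one_mul]

section Hyperbolic

variable (Q : QuadraticForm R M)

/-- The orthogonal sum of `Q` and the hyperbolic form `x² - y²`. -/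
noncomputable abbrev addHyperbolic : QuadraticForm R (M × R × R) :=
  Q.prod ((sq (R := R)).prod (-sq (R := R)))

/-- The generator of square `1` of the hyperbolic summand. -/
noncomputable def posGen : CliffordAlgebra (addHyperbolic Q) := ι _ (0, 1, 0)

/-- The generator of square `-1` of the hyperbolic summand. -/
noncomputable def negGen : CliffordAlgebra (addHyperbolic Q) := ι _ (0, 0, 1)

theorem posGen_mul_self : posGen Q * posGen Q = 1 := by
  simp [posGen, ι_sq_scalar]

theorem negGen_mul_self : negGen Q * negGen Q = -1 := by
  simp [negGen, ι_sq_scalar]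

theorem posGen_mul_negGen : posGen Q * negGen Q = -(negGen Q * posGen Q) :=
  ι_mul_ι_comm_of_isOrtho (by simp [QuadraticMap.isOrtho_def])

theorem posGen_mul_ι (m : M) :
    posGen Q * ι (addHyperbolic Q) (m, 0, 0) = -(ι (addHyperbolic Q) (m, 0, 0) * posGen Q) :=
  ι_mul_ι_comm_of_isOrtho (by simp [QuadraticMap.isOrtho_def, add_comm])

theorem negGen_mul_ι (m : M) :
    negGen Q * ι (addHyperbolic Q) (m, 0, 0) = -(ι (addHyperbolic Q) (m, 0, 0) * negGen Q) :=
  ι_mul_ι_comm_of_isOrtho (by simp [QuadraticMap.isOrtho_def, add_comm])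

theorem posGen_mul_posGen_mul_negGen :
    posGen Q * (posGen Q * negGen Q) = -(posGen Q * negGen Q * posGen Q) := by
  rw [mul_assoc, ← mul_neg, ← posGen_mul_negGen]

theorem posGen_mul_posGen_mul_negGen_eq : posGen Q * (posGen Q * negGen Q) = negGen Q := by
  rw [← mul_assoc, posGen_mul_self, one_mul]

theorem posGen_mul_negGen_mul_self :
    posGen Q * negGen Q * (posGen Q * negGen Q) = 1 := by
  calc posGen Q * negGen Q * (posGen Q * negGen Q)
      = posGen Q * (negGen Q * posGen Q) * negGen Q := by noncomm_ring
    _ = -(posGen Q * posGen Q * (negGen Q * negGen Q)) := by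
      rw [← neg_eq_iff_eq_neg.mpr (posGen_mul_negGen Q)]; noncomm_ring
    _ = 1 := by rw [posGen_mul_self, negGen_mul_self]; simp

theorem posGen_mul_negGen_commute_ι (m : M) :
    Commute (posGen Q * negGen Q) (ι (addHyperbolic Q) (m, 0, 0)) := by
  rw [Commute, SemiconjBy, mul_assoc, negGen_mul_ι, mul_neg, ← mul_assoc, posGen_mul_ι,
    neg_mul, neg_neg, mul_assoc]

/-- The image of a vector of `M × R × R` in the tensor product of the two Clifford algebras. -/
noncomputable def hyperbolicToTensorLinear : M × R × R →ₗ[R]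
    CliffordAlgebra ((sq (R := R)).prod (sq (R := R))) ⊗[R] CliffordAlgebra Q :=
  (TensorProduct.mk R _ _ (planeSnd R) ∘ₗ ι Q).coprod
    ((LinearMap.toSpanSingleton R _ (planeFst R ⊗ₜ[R] 1)).coprod
      (LinearMap.toSpanSingleton R _ ((planeFst R * planeSnd R) ⊗ₜ[R] 1)))

theorem hyperbolicToTensorLinear_apply (v : M × R × R) :
    hyperbolicToTensorLinear Q v = planeSnd R ⊗ₜ[R] ι Q v.1 + v.2.1 • planeFst R ⊗ₜ[R] 1 +
      v.2.2 • (planeFst R * planeSnd R) ⊗ₜ[R] 1 := by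
  simp [hyperbolicToTensorLinear, add_assoc]

theorem hyperbolicToTensorLinear_mul_self (v : M × R × R) :
    hyperbolicToTensorLinear Q v * hyperbolicToTensorLinear Q v =
      algebraMap R _ (addHyperbolic Q v) := by
  obtain ⟨m, x, y⟩ := v
  rw [hyperbolicToTensorLinear_apply, add_add_mul_self_of_anticommute]
  · simp only [smul_mul_smul_comm, Algebra.TensorProduct.tmul_mul_tmul, planeSnd_mul_self,
      planeFst_mul_self, planeFst_mul_planeSnd_mul_self, ι_sq_scalar, mul_one,
      TensorProduct.neg_tmul, smul_neg, Algebra.algebraMap_eq_smul_one, TensorProduct.tmul_smul,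
      QuadraticMap.prod_apply, _root_.neg_apply, sq_apply, add_smul, neg_smul,
      Algebra.TensorProduct.one_def, add_assoc]
  · simp only [mul_smul_comm, smul_mul_assoc, Algebra.TensorProduct.tmul_mul_tmul, mul_one,
      one_mul, planeFst_mul_planeSnd, TensorProduct.neg_tmul, smul_neg, neg_neg]
  · simp only [mul_smul_comm, smul_mul_assoc, Algebra.TensorProduct.tmul_mul_tmul, mul_one,
      one_mul, planeSnd_mul_planeFst_mul_planeSnd, TensorProduct.neg_tmul, smul_neg]
  · simp only [mul_smul_comm, smul_mul_assoc, Algebra.TensorProduct.tmul_mul_tmul, mul_one,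
      planeFst_mul_planeFst_mul_planeSnd, TensorProduct.neg_tmul, smul_neg, smul_comm x y]

/-- The canonical map from the Clifford algebra of `Q ⊥ ⟨1, -1⟩` to the tensor product. -/
noncomputable def hyperbolicToTensor : CliffordAlgebra (addHyperbolic Q) →ₐ[R]
    CliffordAlgebra ((sq (R := R)).prod (sq (R := R))) ⊗[R] CliffordAlgebra Q :=
  lift _ ⟨hyperbolicToTensorLinear Q, hyperbolicToTensorLinear_mul_self Q⟩

theorem hyperbolicToTensor_ι (v : M × R × R) :
    hyperbolicToTensor Q (ι _ v) = planeSnd R ⊗ₜ[R] ι Q v.1 + v.2.1 • planeFst R ⊗ₜ[R] 1 +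
      v.2.2 • (planeFst R * planeSnd R) ⊗ₜ[R] 1 := by
  rw [hyperbolicToTensor, lift_ι_apply, hyperbolicToTensorLinear_apply]

theorem hyperbolicToTensor_posGen :
    hyperbolicToTensor Q (posGen Q) = planeFst R ⊗ₜ[R] 1 := by
  simp [posGen, hyperbolicToTensor_ι]

theorem hyperbolicToTensor_negGen :
    hyperbolicToTensor Q (negGen Q) = (planeFst R * planeSnd R) ⊗ₜ[R] 1 := by
  simp [negGen, hyperbolicToTensor_ι]

/-- The embedding of the Clifford algebra of `x² + y²` sending the generators to `e₊` and
`e₊ e₋`. -/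
noncomputable def planeToHyperbolic :
    CliffordAlgebra ((sq (R := R)).prod (sq (R := R))) →ₐ[R] CliffordAlgebra (addHyperbolic Q) :=
  lift _ ⟨(LinearMap.toSpanSingleton R _ (posGen Q)).coprod
    (LinearMap.toSpanSingleton R _ (posGen Q * negGen Q)), fun v => by
      simp only [LinearMap.coprod_apply, LinearMap.toSpanSingleton_apply, add_mul, mul_add,
        smul_mul_smul_comm, posGen_mul_self, posGen_mul_negGen_mul_self,
        posGen_mul_posGen_mul_negGen, Algebra.algebraMap_eq_smul_one, QuadraticMap.prod_apply,
        sq_apply, add_smul, smul_neg, mul_comm v.2 v.1]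
      abel⟩

theorem planeToHyperbolic_ι (v : R × R) :
    planeToHyperbolic Q (ι _ v) = v.1 • posGen Q + v.2 • (posGen Q * negGen Q) := by
  simp [planeToHyperbolic]

theorem planeToHyperbolic_planeFst : planeToHyperbolic Q (planeFst R) = posGen Q := by
  simp [planeFst, planeToHyperbolic_ι]

theorem planeToHyperbolic_planeSnd :
    planeToHyperbolic Q (planeSnd R) = posGen Q * negGen Q := by
  simp [planeSnd, planeToHyperbolic_ι]

/-- The embedding of the Clifford algebra of `Q` sending a vector `m` to `e₊ e₋ m`. -/
noncomputable def twistedInclusion : CliffordAlgebra Q →ₐ[R] CliffordAlgebra (addHyperbolic Q) :=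
  lift _ ⟨LinearMap.mulLeft R (posGen Q * negGen Q) ∘ₗ ι (addHyperbolic Q) ∘ₗ
    LinearMap.inl R M (R × R), fun m => by
      simp only [LinearMap.comp_apply, LinearMap.mulLeft_apply, LinearMap.inl_apply]
      change _ * ι (addHyperbolic Q) (m, 0, 0) * (_ * ι (addHyperbolic Q) (m, 0, 0)) = _
      rw [(posGen_mul_negGen_commute_ι Q m).symm.mul_mul_mul_comm, posGen_mul_negGen_mul_self,
        ι_sq_scalar]
      simp⟩

theorem twistedInclusion_ι (m : M) :
    twistedInclusion Q (ι Q m) = posGen Q * negGen Q * ι (addHyperbolic Q) (m, 0, 0) := by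
  simp only [twistedInclusion, lift_ι_apply]
  rfl

theorem planeToHyperbolic_commute_twistedInclusion
    (x : CliffordAlgebra ((sq (R := R)).prod (sq (R := R)))) (y : CliffordAlgebra Q) :
    Commute (planeToHyperbolic Q x) (twistedInclusion Q y) := by
  refine commute_of_commute_ι _ _ (fun v m => ?_) x y
  rw [planeToHyperbolic_ι, twistedInclusion_ι]
  refine ((Commute.smul_left ?_ _).add_left (Commute.smul_left ?_ _))
  · rw [Commute, SemiconjBy, ← mul_assoc, posGen_mul_posGen_mul_negGen, neg_mul,
      mul_assoc (posGen Q * negGen Q) (posGen Q), posGen_mul_ι, mul_neg, neg_neg, ← mul_assoc]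
  · exact (Commute.refl _).mul_right (posGen_mul_negGen_commute_ι Q m)

/-- The canonical map from the tensor product to the Clifford algebra of `Q ⊥ ⟨1, -1⟩`. -/
noncomputable def tensorToHyperbolic :
    CliffordAlgebra ((sq (R := R)).prod (sq (R := R))) ⊗[R] CliffordAlgebra Q →ₐ[R]
      CliffordAlgebra (addHyperbolic Q) :=
  Algebra.TensorProduct.lift (planeToHyperbolic Q) (twistedInclusion Q)
    (planeToHyperbolic_commute_twistedInclusion Q)

theorem tensorToHyperbolic_tmul (x : CliffordAlgebra ((sq (R := R)).prod (sq (R := R))))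
    (y : CliffordAlgebra Q) :
    tensorToHyperbolic Q (x ⊗ₜ[R] y) = planeToHyperbolic Q x * twistedInclusion Q y :=
  Algebra.TensorProduct.lift_tmul _ _ _ _ _

theorem hyperbolicToTensor_comp_tensorToHyperbolic :
    (hyperbolicToTensor Q).comp (tensorToHyperbolic Q) = AlgHom.id R _ := by
  apply Algebra.TensorProduct.ext
  · apply CliffordAlgebra.hom_ext
    refine LinearMap.ext fun v => ?_
    have hv : ι ((sq (R := R)).prod (sq (R := R))) v = v.1 • planeFst R + v.2 • planeSnd R := by
      simp [planeFst, planeSnd, ← map_smul, ← map_add]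
    change hyperbolicToTensor Q (tensorToHyperbolic Q (ι _ v ⊗ₜ[R] 1)) = ι _ v ⊗ₜ[R] 1
    rw [tensorToHyperbolic_tmul, map_one, mul_one, planeToHyperbolic_ι, map_add, map_smul,
      map_smul, map_mul, hyperbolicToTensor_posGen, hyperbolicToTensor_negGen,
      Algebra.TensorProduct.tmul_mul_tmul, planeFst_mul_planeFst_mul_planeSnd_eq, mul_one, hv,
      TensorProduct.add_tmul, TensorProduct.smul_tmul', TensorProduct.smul_tmul']
  · apply CliffordAlgebra.hom_ext
    refine LinearMap.ext fun m => ?_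
    change hyperbolicToTensor Q (tensorToHyperbolic Q (1 ⊗ₜ[R] ι Q m)) = 1 ⊗ₜ[R] ι Q m
    rw [tensorToHyperbolic_tmul, map_one, one_mul, twistedInclusion_ι, map_mul, map_mul,
      hyperbolicToTensor_posGen, hyperbolicToTensor_negGen, Algebra.TensorProduct.tmul_mul_tmul,
      planeFst_mul_planeFst_mul_planeSnd_eq, hyperbolicToTensor_ι]
    simp [planeSnd_mul_self]

theorem tensorToHyperbolic_comp_hyperbolicToTensor :
    (tensorToHyperbolic Q).comp (hyperbolicToTensor Q) = AlgHom.id R _ := by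
  apply CliffordAlgebra.hom_ext
  refine LinearMap.ext fun v => ?_
  have hv : ι (addHyperbolic Q) v =
      ι (addHyperbolic Q) (v.1, 0, 0) + v.2.1 • posGen Q + v.2.2 • negGen Q := by
    simp [posGen, negGen, ← map_smul, ← map_add]
  change tensorToHyperbolic Q (hyperbolicToTensor Q (ι _ v)) = ι _ v
  rw [hyperbolicToTensor_ι, map_add, map_add, map_smul, map_smul, tensorToHyperbolic_tmul,
    tensorToHyperbolic_tmul, tensorToHyperbolic_tmul, map_one, mul_one, mul_one, map_mul,
    planeToHyperbolic_planeFst, planeToHyperbolic_planeSnd, twistedInclusion_ι, ← mul_assoc,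
    posGen_mul_negGen_mul_self, one_mul, posGen_mul_posGen_mul_negGen_eq, ← hv]

/-- Tensoring with the Clifford algebra of `x² + y²` adds a hyperbolic plane to `Q`. -/
noncomputable def tensorEquivHyperbolic :
    CliffordAlgebra ((sq (R := R)).prod (sq (R := R))) ⊗[R] CliffordAlgebra Q ≃ₐ[R]
      CliffordAlgebra (addHyperbolic Q) :=
  AlgEquiv.ofAlgHom (tensorToHyperbolic Q) (hyperbolicToTensor Q)
    (tensorToHyperbolic_comp_hyperbolicToTensor Q) (hyperbolicToTensor_comp_tensorToHyperbolic Q)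

end Hyperbolic

end CliffordAlgebra

/-- The form of signature `(2, 0)` is `x² + y²`. -/
noncomputable def signatureFormTwoZero :
    (signatureForm 2 0).IsometryEquiv
      ((QuadraticMap.sq (R := ℝ)).prod (QuadraticMap.sq (R := ℝ))) where
  toLinearEquiv := LinearEquiv.finTwoArrow ℝ ℝ
  map_app' v := by
    simp [signatureForm, QuadraticMap.weightedSumSquares_apply, Fin.sum_univ_two]

/-- The index of `Fin (p + 1 + (q + 1))` as an index of `Fin (p + q)` or one of two new ones. -/
def signatureIndexEquiv (p q : ℕ) : Fin (p + q) ⊕ (Fin 1 ⊕ Fin 1) ≃ Fin (p + 1 + (q + 1)) :=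
  (finSumFinEquiv.symm.sumCongr (Equiv.refl _)).trans <|
    (Equiv.sumSumSumComm _ _ _ _).trans <|
      (finSumFinEquiv.sumCongr finSumFinEquiv).trans finSumFinEquiv

/-- Raising both entries of the signature by one adds a hyperbolic plane. -/
noncomputable def signatureFormSuccSucc (p q : ℕ) :
    (signatureForm (p + 1) (q + 1)).IsometryEquiv
      (CliffordAlgebra.addHyperbolic (signatureForm p q)) where
  toLinearEquiv :=
    (LinearEquiv.funCongrLeft ℝ ℝ (signatureIndexEquiv p q)).trans <|
      (LinearEquiv.sumArrowLequivProdArrow _ _ ℝ ℝ).trans <|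
        (LinearEquiv.refl ℝ _).prodCongr <|
          (LinearEquiv.sumArrowLequivProdArrow _ _ ℝ ℝ).trans <|
            (LinearEquiv.funUnique (Fin 1) ℝ ℝ).prodCongr (LinearEquiv.funUnique (Fin 1) ℝ ℝ)
  map_app' v := by
    simp only [signatureForm, QuadraticMap.weightedSumSquares_apply, QuadraticMap.prod_apply]
    rw [← (signatureIndexEquiv p q).sum_comp, Fintype.sum_sum_type, Fintype.sum_sum_type,
      Fin.sum_univ_add, Fin.sum_univ_add]
    have h (k : ℕ) : ¬ p + 1 + k ≤ p := by omega
    simp [signatureIndexEquiv, LinearEquiv.funCongrLeft, h]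

/-- The `n = 1` case: tensoring with `Cl(2,0;ℝ)` raises both entries of the signature by one. -/
noncomputable def clTwoZeroTensorEquiv (p q : ℕ) :
    Cl 2 0 ⊗[ℝ] Cl p q ≃ₐ[ℝ] Cl (p + 1) (q + 1) :=
  (Algebra.TensorProduct.congr (CliffordAlgebra.equivOfIsometry signatureFormTwoZero)
    AlgEquiv.refl).trans <|
    (CliffordAlgebra.tensorEquivHyperbolic (signatureForm p q)).trans
      (CliffordAlgebra.equivOfIsometry (signatureFormSuccSucc p q)).symm

/-- For every `n p q`, the `n`-fold tensor power of `Cl(2,0;ℝ)` tensored with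
`Cl(p,q;ℝ)` is isomorphic as a real algebra to `Cl(p+n,q+n;ℝ)`. -/
theorem cl20_tensorPower_iso (n p q : ℕ) :
    Nonempty (((⨂[ℝ] _ : Fin n, Cl 2 0) ⊗[ℝ] Cl p q) ≃ₐ[ℝ] Cl (p + n) (q + n)) := by
  induction n generalizing p q with
  | zero =>
    exact ⟨(Algebra.TensorProduct.congr (PiTensorProduct.isEmptyAlgEquiv ℝ (Cl 2 0) (Fin 0))
      AlgEquiv.refl).trans (Algebra.TensorProduct.lid ℝ (Cl p q))⟩
  | succ n ih =>
    obtain ⟨e⟩ := ih (p + 1) (q + 1)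
    rw [show p + (n + 1) = p + 1 + n by omega, show q + (n + 1) = q + 1 + n by omega]
    exact ⟨(Algebra.TensorProduct.congr (PiTensorProduct.finSuccAlgEquiv ℝ (Cl 2 0) n)
      AlgEquiv.refl).trans <|
        (Algebra.TensorProduct.assoc ℝ ℝ ℝ _ _ _).trans <|
          (Algebra.TensorProduct.congr AlgEquiv.refl (clTwoZeroTensorEquiv p q)).trans e⟩
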